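/- Let N ≥ 2, let B ⊂ ℝ^N be a radial domain, let 𝓤 be a set of continuous functions on B, and define M = {e ∈ S : u(x) ≥ u(σ_e(x)) for all x ∈ B(e) and all u ∈ 𝓤}. Suppose S = M ∪ (−M) and that u ≡ u ∘ σ_{e_i} on B for every u ∈ 𝓤 and i = 1, …, N−1, where e₁, …, e_N denotes the standard orthonormal basis of ℝ^N. Then for every q ∈ S with q·e_N = 0 one has u ≡ u ∘ σ_q on B for every u ∈ 𝓤; in particular, every u ∈ 𝓤 is axially symmetric with respect to the axis ℝe_N. -/

import Mathlib

/-!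
Fix a unit vector `q ⟂ e_N`. Composing the `N - 1` given coordinate symmetries shows that every
`u ∈ 𝓤` is invariant under the half-turn `T x = 2 (x·e_N) e_N - x` about the axis `ℝ e_N`
(`apply_halfTurn`). Since `T q = -q`, the map `T` interchanges the two sides of `H(q)` and commutes
with `σ_q`. One of `±q` lies in `M`, and both define the same reflection, so let `q ∈ M`. For
`x ∈ B(q)`, the inequality `u ∘ σ_q ≤ u` at `x` and at `T (σ_q x) ∈ B(q)` gives
`u (σ_q x) ≤ u x` and `u x = u (T x) ≤ u (T (σ_q x)) = u (σ_q x)`, hence equality.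

For an isometry `Q` fixing `e_N` and a point `x` with `Q x ≠ x`, the reflection `σ_q` with
`q = (Q x - x) / ‖Q x - x‖` maps `x` to `Q x`, and `q ⟂ e_N` because `Q` preserves `x·e_N`. So
`u (Q x) = u (σ_q x) = u x`.
-/

open Set Metric Filter
open scoped RealInnerProductSpace

noncomputable section

variable {N : ℕ}

/-- Reflection through the hyperplane `H(e) = {x : ⟪x,e⟫ = 0}`:
`σ_e(x) = x - 2 (x·e) e`. -/
def reflHyp (e x : EuclideanSpace ℝ (Fin N)) : EuclideanSpace ℝ (Fin N) :=
  x - (2 * ⟪x, e⟫) • e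

/-- The half domain `B(e) = {x ∈ B : x·e > 0}`. -/
def halfDom (B : Set (EuclideanSpace ℝ (Fin N))) (e : EuclideanSpace ℝ (Fin N)) :
    Set (EuclideanSpace ℝ (Fin N)) := {x ∈ B | 0 < ⟪x, e⟫}

/-- A radial domain: an open ball or an open annulus centered at the origin. -/
def IsRadialDomain (B : Set (EuclideanSpace ℝ (Fin N))) : Prop :=
  (∃ R, 0 < R ∧ B = Metric.ball 0 R) ∨
  (∃ r R, 0 < r ∧ r < R ∧ B = {x : EuclideanSpace ℝ (Fin N) | r < ‖x‖ ∧ ‖x‖ < R})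

/-- `u` is foliated Schwarz symmetric on `D` with respect to the unit vector `p`:
`u(x) ≥ u(y)` whenever `|x| = |y|` and `x·p ≥ y·p`.  (This is equivalent to axial
symmetry with respect to `ℝp` together with monotonicity in the polar angle.) -/
def FoliatedSchwarzOn (D : Set (EuclideanSpace ℝ (Fin N)))
    (u : EuclideanSpace ℝ (Fin N) → ℝ) (p : EuclideanSpace ℝ (Fin N)) : Prop :=
  ∀ x ∈ D, ∀ y ∈ D, ‖x‖ = ‖y‖ → ⟪y, p⟫ ≤ ⟪x, p⟫ → u y ≤ u x

/-- The set `M = {e ∈ S : u ≥ u ∘ σ_e on B(e) for all u ∈ 𝓤}`. -/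
def reflMonotoneSet (B : Set (EuclideanSpace ℝ (Fin N)))
    (𝓤 : Set (EuclideanSpace ℝ (Fin N) → ℝ)) : Set (EuclideanSpace ℝ (Fin N)) :=
  {e | ‖e‖ = 1 ∧ ∀ u ∈ 𝓤, ∀ x ∈ halfDom B e, u (reflHyp e x) ≤ u x}

lemma norm_reflHyp {e : EuclideanSpace ℝ (Fin N)} (he : ‖e‖ = 1) (x : EuclideanSpace ℝ (Fin N)) :
    ‖reflHyp e x‖ = ‖x‖ := by
  have h : ‖reflHyp e x‖ ^ 2 = ‖x‖ ^ 2 := by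
    rw [reflHyp, norm_sub_sq_real, norm_smul, inner_smul_right, he, mul_one, Real.norm_eq_abs,
      sq_abs]
    ring
  exact (sq_eq_sq₀ (norm_nonneg _) (norm_nonneg _)).1 h

lemma reflHyp_neg (e x : EuclideanSpace ℝ (Fin N)) : reflHyp (-e) x = reflHyp e x := by
  simp [reflHyp]

lemma inner_reflHyp {e : EuclideanSpace ℝ (Fin N)} (he : ‖e‖ = 1) (x : EuclideanSpace ℝ (Fin N)) :
    ⟪reflHyp e x, e⟫ = -⟪x, e⟫ := by
  rw [reflHyp, inner_sub_left, real_inner_smul_left, real_inner_self_eq_norm_sq, he]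
  ring

lemma reflHyp_reflHyp {e : EuclideanSpace ℝ (Fin N)} (he : ‖e‖ = 1)
    (x : EuclideanSpace ℝ (Fin N)) : reflHyp e (reflHyp e x) = x := by
  rw [reflHyp, inner_reflHyp he, reflHyp]
  module

lemma IsRadialDomain.mem_of_norm_eq {B : Set (EuclideanSpace ℝ (Fin N))} (hB : IsRadialDomain B)
    {x y : EuclideanSpace ℝ (Fin N)} (hx : x ∈ B) (h : ‖y‖ = ‖x‖) : y ∈ B := by
  rcases hB with ⟨R, -, rfl⟩ | ⟨r, R, -, -, rfl⟩
  · simpa [h] using hx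
  · simpa [h] using hx

/-- The reflection through `H(a)` maps `x` to `y` when `a` is the unit vector along `y - x` and
`‖x‖ = ‖y‖`. -/
lemma reflHyp_normalize_sub {x y : EuclideanSpace ℝ (Fin N)} (h : ‖y‖ = ‖x‖) (hne : y ≠ x) :
    reflHyp (‖y - x‖⁻¹ • (y - x)) x = y := by
  have hpos : ‖y - x‖ ≠ 0 := norm_ne_zero_iff.2 (sub_ne_zero.2 hne)
  have h2 : 2 * ⟪x, y - x⟫ = -‖y - x‖ ^ 2 := by
    rw [norm_sub_sq_real, inner_sub_right, real_inner_self_eq_norm_sq, h, real_inner_comm]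
    ring
  have h3 : 2 * (‖y - x‖⁻¹ * ⟪x, y - x⟫) * ‖y - x‖⁻¹ = -1 := by
    field_simp
    linarith
  rw [reflHyp, inner_smul_right, smul_smul, h3]
  module

/-- The half-turn `x ↦ 2 (x·p) p - x` about the axis `ℝ p`, for a unit vector `p`. -/
def halfTurn (p x : EuclideanSpace ℝ (Fin N)) : EuclideanSpace ℝ (Fin N) :=
  (2 * ⟪x, p⟫) • p - x

lemma halfTurn_eq_neg_reflHyp (p x : EuclideanSpace ℝ (Fin N)) :
    halfTurn p x = -reflHyp p x := by
  simp [halfTurn, reflHyp]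

lemma halfTurn_reflHyp_comm {p q : EuclideanSpace ℝ (Fin N)} (hqp : ⟪q, p⟫ = 0)
    (x : EuclideanSpace ℝ (Fin N)) :
    halfTurn p (reflHyp q x) = reflHyp q (halfTurn p x) := by
  have hpq : ⟪p, q⟫ = 0 := by rw [real_inner_comm]; exact hqp
  simp only [halfTurn, reflHyp, inner_sub_left, real_inner_smul_left, hqp, hpq]
  module

/-- Invariance under the reflections in the first `N - 1` coordinates gives invariance under the
half-turn about the last coordinate axis. -/
lemma apply_halfTurn {B : Set (EuclideanSpace ℝ (Fin N))} (hB : IsRadialDomain B)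
    {u : EuclideanSpace ℝ (Fin N) → ℝ} (hN : N - 1 < N)
    (hu : ∀ i : Fin N, (i : ℕ) < N - 1 → ∀ x ∈ B,
      u (reflHyp (EuclideanSpace.single i (1:ℝ)) x) = u x)
    {x : EuclideanSpace ℝ (Fin N)} (hx : x ∈ B) :
    u (halfTurn (EuclideanSpace.single (⟨N - 1, hN⟩ : Fin N) (1:ℝ)) x) = u x := by
  -- Flip the signs of the first `k` coordinates, one coordinate at a time.
  have key : ∀ k : ℕ, k ≤ N - 1 →
      WithLp.toLp 2 (fun i : Fin N => if (i : ℕ) < k then -x i else x i) ∈ B ∧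
      u (WithLp.toLp 2 (fun i : Fin N => if (i : ℕ) < k then -x i else x i)) = u x := by
    intro k
    induction k with
    | zero => intro _; simpa using hx
    | succ k ih =>
      intro hk
      obtain ⟨hmem, heq⟩ := ih (by omega)
      have hstep : WithLp.toLp 2 (fun i : Fin N => if (i : ℕ) < k + 1 then -x i else x i) =
          reflHyp (EuclideanSpace.single (⟨k, by omega⟩ : Fin N) (1:ℝ))
            (WithLp.toLp 2 (fun i : Fin N => if (i : ℕ) < k then -x i else x i)) := by
        ext i
        rcases lt_trichotomy (i : ℕ) k with h | h | h
        · have h' : i ≠ ⟨k, by omega⟩ := fun h' => by simp [h'] at h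
          simp [reflHyp, h, h', Nat.lt_succ_of_lt h]
        · subst h
          simp [reflHyp, EuclideanSpace.inner_single_right]
          ring
        · have h' : i ≠ ⟨k, by omega⟩ := fun h' => by simp [h'] at h
          simp [reflHyp, h', show ¬ (i : ℕ) < k by omega, show ¬ (i : ℕ) < k + 1 by omega]
      rw [hstep]
      exact ⟨hB.mem_of_norm_eq hmem (norm_reflHyp (by simp) _),
        (hu _ (by simp only []; omega) _ hmem).trans heq⟩
  rw [← (key (N - 1) le_rfl).2]
  congr 1
  ext i
  by_cases h : (i : ℕ) < N - 1
  · have h' : i ≠ ⟨N - 1, hN⟩ := fun h' => by simp [h'] at h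
    simp [halfTurn, h, h']
  · obtain rfl : i = ⟨N - 1, hN⟩ := Fin.ext (by simp only []; omega)
    simp [halfTurn, EuclideanSpace.inner_single_right]
    ring

/-- If `u` is invariant under the half-turn about `ℝ p`, then for `q ⟂ p` the one-sided inequality
`u ∘ σ_q ≤ u` on `B(q)` forces `u ∘ σ_q = u` on `B`. -/
lemma apply_reflHyp_of_halfTurn {B : Set (EuclideanSpace ℝ (Fin N))} (hB : IsRadialDomain B)
    {u : EuclideanSpace ℝ (Fin N) → ℝ} {p q : EuclideanSpace ℝ (Fin N)} (hp : ‖p‖ = 1)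
    (hq : ‖q‖ = 1) (hqp : ⟪q, p⟫ = 0) (hT : ∀ x ∈ B, u (halfTurn p x) = u x)
    (hM : ∀ x ∈ halfDom B q, u (reflHyp q x) ≤ u x) :
    ∀ x ∈ B, u (reflHyp q x) = u x := by
  have hpq : ⟪p, q⟫ = 0 := by rw [real_inner_comm]; exact hqp
  have hpos : ∀ x ∈ B, 0 < ⟪x, q⟫ → u (reflHyp q x) = u x := by
    intro x hx hxq
    have hrB : reflHyp q x ∈ B := hB.mem_of_norm_eq hx (norm_reflHyp hq x)
    refine le_antisymm (hM x ⟨hx, hxq⟩) ?_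
    have hTr : halfTurn p (reflHyp q x) ∈ halfDom B q := by
      refine ⟨hB.mem_of_norm_eq hrB ?_, ?_⟩
      · rw [halfTurn_eq_neg_reflHyp, norm_neg, norm_reflHyp hp]
      · rw [halfTurn, inner_sub_left, real_inner_smul_left, hpq, inner_reflHyp hq]
        linarith
    have h := hM _ hTr
    rwa [hT _ hrB, ← halfTurn_reflHyp_comm hqp, reflHyp_reflHyp hq, hT x hx] at h
  intro x hx
  rcases lt_trichotomy ⟪x, q⟫ 0 with h | h | h
  · have := hpos (reflHyp q x) (hB.mem_of_norm_eq hx (norm_reflHyp hq x))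
      (by rw [inner_reflHyp hq]; linarith)
    rw [reflHyp_reflHyp hq] at this
    exact this.symm
  · simp [reflHyp, h]
  · exact hpos x hx h

/-- second step in the proof of Proposition `newprop`:
if `S = M ∪ (−M)` and every `u ∈ 𝓤` is symmetric with respect to the
hyperplanes orthogonal to the first `N−1` standard basis vectors, then every
hyperplane containing the `x_N`-axis is a symmetry hyperplane for all `u ∈ 𝓤`;
in particular every `u ∈ 𝓤` is axially symmetric with respect to `ℝ e_N`
(i.e. invariant under every rotation fixing `e_N`). -/
theorem axial_symmetry_of_coordinate_symmetries
    (N : ℕ) (hN : 2 ≤ N)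
    (B : Set (EuclideanSpace ℝ (Fin N))) (hB : IsRadialDomain B)
    (𝓤 : Set (EuclideanSpace ℝ (Fin N) → ℝ))
    (h𝓤 : ∀ u ∈ 𝓤, ContinuousOn u B)
    (hSM : ∀ e : EuclideanSpace ℝ (Fin N), ‖e‖ = 1 →
      e ∈ reflMonotoneSet B 𝓤 ∨ -e ∈ reflMonotoneSet B 𝓤)
    (hsym : ∀ u ∈ 𝓤, ∀ i : Fin N, (i : ℕ) < N - 1 → ∀ x ∈ B,
      u (reflHyp (EuclideanSpace.single i (1:ℝ)) x) = u x) :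
    (∀ q : EuclideanSpace ℝ (Fin N), ‖q‖ = 1 →
        ⟪q, EuclideanSpace.single (⟨N - 1, by omega⟩ : Fin N) (1:ℝ)⟫ = 0 →
        ∀ u ∈ 𝓤, ∀ x ∈ B, u (reflHyp q x) = u x) ∧
    (∀ Q : EuclideanSpace ℝ (Fin N) ≃ₗᵢ[ℝ] EuclideanSpace ℝ (Fin N),
        Q.toLinearEquiv.det = 1 →
        Q (EuclideanSpace.single (⟨N - 1, by omega⟩ : Fin N) (1:ℝ)) =
          EuclideanSpace.single (⟨N - 1, by omega⟩ : Fin N) (1:ℝ) →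
        ∀ u ∈ 𝓤, ∀ x ∈ B, u (Q x) = u x) := by
  have hp : ‖EuclideanSpace.single (⟨N - 1, by omega⟩ : Fin N) (1:ℝ)‖ = 1 := by simp
  have main : ∀ q : EuclideanSpace ℝ (Fin N), ‖q‖ = 1 →
      ⟪q, EuclideanSpace.single (⟨N - 1, by omega⟩ : Fin N) (1:ℝ)⟫ = 0 →
      ∀ u ∈ 𝓤, ∀ x ∈ B, u (reflHyp q x) = u x := by
    intro q hq hqp u hu x hx
    have hT : ∀ y ∈ B,
        u (halfTurn (EuclideanSpace.single (⟨N - 1, by omega⟩ : Fin N) (1:ℝ)) y) = u y :=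
      fun y hy => apply_halfTurn hB _ (hsym u hu) hy
    rcases hSM q hq with hM | hM
    · exact apply_reflHyp_of_halfTurn hB hp hq hqp hT (hM.2 u hu) x hx
    · rw [← reflHyp_neg]
      exact apply_reflHyp_of_halfTurn hB hp hM.1 (by rw [inner_neg_left, hqp, neg_zero]) hT
        (hM.2 u hu) x hx
  refine ⟨main, fun Q _ hQ u hu x hx => ?_⟩
  by_cases hne : Q x = x
  · rw [hne]
  have hnorm : ‖Q x - x‖ ≠ 0 := norm_ne_zero_iff.2 (sub_ne_zero.2 hne)
  have hQp : ⟪Q x, EuclideanSpace.single (⟨N - 1, by omega⟩ : Fin N) (1:ℝ)⟫ =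
      ⟪x, EuclideanSpace.single (⟨N - 1, by omega⟩ : Fin N) (1:ℝ)⟫ := by
    conv_lhs => rw [← hQ]
    exact Q.inner_map_map _ _
  have h := main (‖Q x - x‖⁻¹ • (Q x - x))
    (by rw [norm_smul, norm_inv, norm_norm, inv_mul_cancel₀ hnorm])
    (by rw [real_inner_smul_left, inner_sub_left, hQp, sub_self, mul_zero]) u hu x hx
  rwa [reflHyp_normalize_sub (Q.norm_map x) hne] at h

end
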